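/- Let G=(V,E) be a finite weighted graph, 0 < ε ≤ 1, B ⊆ V, and S a nonempty proper subset of B with T = B∖S. If e(S,B)·vol(B) ≤ (ε/3)·vol(T)·e(S,V∖B) and max{φ(S), φ(T)} ≥ (1+ε)·φ(B), then min{φ(S), φ(T)} ≤ φ(B). -/

import Mathlib

open Finset

/-- Weighted degree of a vertex. -/
noncomputable def deg {V : Type*} [Fintype V] (w : V → V → ℝ) (v : V) : ℝ :=
  ∑ u, w v u

/-- Volume of a set of vertices. -/
noncomputable def vol {V : Type*} [Fintype V] (w : V → V → ℝ) (S : Finset V) : ℝ :=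
  ∑ v ∈ S, deg w v

/-- Total weight of edges from `S` to `T \ S`. -/
noncomputable def eW {V : Type*} [DecidableEq V] (w : V → V → ℝ) (S T : Finset V) : ℝ :=
  ∑ u ∈ S, ∑ v ∈ T \ S, w u v

/-- Conductance of `S` in `G`. -/
noncomputable def phi {V : Type*} [Fintype V] [DecidableEq V] (w : V → V → ℝ)
    (S : Finset V) : ℝ :=
  eW w S Finset.univ / vol w S

/-- Volume of `S ⊆ P` inside the induced subgraph `G[P]`. -/
noncomputable def volIn {V : Type*} [DecidableEq V] (w : V → V → ℝ) (P S : Finset V) : ℝ :=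
  ∑ v ∈ S, ∑ u ∈ P, w v u

/-- `φ(G[P]) ≥ a` : every nonempty proper `S ⊊ P` with at most half of the induced volume
has induced conductance at least `a` (stated multiplicatively). -/
def inCondGE {V : Type*} [DecidableEq V] (w : V → V → ℝ) (P : Finset V) (a : ℝ) : Prop :=
  ∀ S : Finset V, S ⊆ P → S.Nonempty → S ≠ P →
    volIn w P S ≤ volIn w P P / 2 → a * volIn w P S ≤ eW w S P

/-- `ρ(k)`: the minimum over families of `k` pairwise disjoint nonempty subsets of the
maximum conductance. -/
noncomputable def rho {V : Type*} [Fintype V] [DecidableEq V] (w : V → V → ℝ) (k : ℕ) : ℝ :=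
  sInf { r | ∃ A : Fin k → Finset V, (∀ i, (A i).Nonempty) ∧
    (∀ i j, i ≠ j → Disjoint (A i) (A j)) ∧ r = ⨆ i, phi w (A i) }

/-- The normalized Laplacian `I - D^{-1/2} A D^{-1/2}`. -/
noncomputable def normLap {V : Type*} [Fintype V] [DecidableEq V] (w : V → V → ℝ) : Matrix V V ℝ :=
  1 - Matrix.of fun u v => w u v / (Real.sqrt (deg w u) * Real.sqrt (deg w v))

/-- `lam w k` is the `k`-th smallest eigenvalue (1-indexed) of the normalized Laplacian. -/
noncomputable def lam {V : Type*} [Fintype V] [DecidableEq V] (w : V → V → ℝ) (k : ℕ) : ℝ :=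
  if h : (normLap w).IsHermitian then
    ((Finset.univ.val.map h.eigenvalues).sort (· ≤ ·)).getD (k - 1) 0
  else 0

/-!
Write `T = B \ S` and `p = φ(B)`, let `a` and `b` be the weights leaving `B` from `S` and from `T`,
and `c` the weight between `S` and `T`. Since `a + b = p vol(S) + p vol(T)`, the bound `φ(T) ≤ p`
means `p vol(S) + c ≤ a`: the surplus of `S` over its fair share of the boundary of `B` must pay for
the internal cut. If `φ(S) ≥ (1 + ε) p`, there is such a surplus as soon as `c` is at most `ε/3`
times `a` or `ε/3` times `p vol(S)`. The hypothesis on the internal cut yields the first bound for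
`S`, because `vol(T) ≤ vol(B)`, and the second one with `T` in place of `S`, because `a ≤ p vol(B)`.
-/

theorem add_le_of_one_add_mul_le_add {K : Type*} [Field K] [LinearOrder K]
    [IsStrictOrderedRing K] {ε a c x : K} (hε0 : 0 ≤ ε) (hε1 : ε ≤ 1) (hx : 0 ≤ x)
    (hc : c ≤ ε / 3 * a) (h : (1 + ε) * x ≤ a + c) : x + c ≤ a := by
  have hcoeff : 1 + ε / 3 ≤ (1 - ε / 3) * (1 + ε) := by nlinarith
  have hxa : (1 + ε) * x ≤ (1 + ε / 3) * a := by linarith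
  have hscaled : (1 + ε / 3) * x ≤ (1 + ε / 3) * ((1 - ε / 3) * a) :=
    calc (1 + ε / 3) * x ≤ (1 - ε / 3) * (1 + ε) * x := by gcongr
      _ = (1 - ε / 3) * ((1 + ε) * x) := mul_assoc _ _ _
      _ ≤ (1 - ε / 3) * ((1 + ε / 3) * a) := mul_le_mul_of_nonneg_left hxa (by linarith)
      _ = (1 + ε / 3) * ((1 - ε / 3) * a) := mul_left_comm _ _ _
  have hle : x ≤ (1 - ε / 3) * a := le_of_mul_le_mul_left hscaled (by positivity)
  linarith

section EdgeWeight

variable {V : Type*} [DecidableEq V] {w : V → V → ℝ} {S T U B : Finset V}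

theorem eW_nonneg (hw : ∀ u v, 0 ≤ w u v) (S T : Finset V) : 0 ≤ eW w S T :=
  sum_nonneg fun u _ => sum_nonneg fun v _ => hw u v

theorem eW_add_eW_sdiff_right (hTU : T ⊆ U) (S : Finset V) :
    eW w S T + eW w S (U \ T) = eW w S U := by
  have hsub : T \ S ⊆ U \ S := sdiff_subset_sdiff hTU subset_rfl
  have hdiff : (U \ T) \ S = (U \ S) \ (T \ S) := by grind
  simp only [eW, hdiff, ← sum_add_distrib]
  exact sum_congr rfl fun u _ => by rw [add_comm, sum_sdiff hsub]

theorem eW_add_eW_sdiff_left (hSB : S ⊆ B) (U : Finset V) :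
    eW w S (U \ B) + eW w (B \ S) (U \ B) = eW w B U := by
  have hS : (U \ B) \ S = U \ B := by grind
  have hT : (U \ B) \ (B \ S) = U \ B := by grind
  rw [eW, eW, hS, hT, add_comm, sum_sdiff hSB, eW]

theorem eW_sdiff_eq_eW (hsym : ∀ u v, w u v = w v u) (hSB : S ⊆ B) :
    eW w (B \ S) B = eW w S B := by
  rw [eW, eW, Finset.sdiff_sdiff_eq_self hSB, sum_comm]
  exact sum_congr rfl fun u _ => sum_congr rfl fun v _ => hsym v u

end EdgeWeight

section Conductance

variable {V : Type*} [Fintype V] {w : V → V → ℝ} {S B : Finset V}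

theorem vol_nonneg (hw : ∀ u v, 0 ≤ w u v) (S : Finset V) : 0 ≤ vol w S :=
  sum_nonneg fun v _ => sum_nonneg fun u _ => hw v u

theorem vol_pos (hdeg : ∀ v, 0 < deg w v) (hS : S.Nonempty) : 0 < vol w S :=
  sum_pos (fun v _ => hdeg v) hS

variable [DecidableEq V]

theorem vol_add_vol_sdiff (hSB : S ⊆ B) : vol w S + vol w (B \ S) = vol w B := by
  rw [add_comm]
  exact sum_sdiff hSB

theorem phi_nonneg (hw : ∀ u v, 0 ≤ w u v) (S : Finset V) : 0 ≤ phi w S :=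
  div_nonneg (eW_nonneg hw S univ) (vol_nonneg hw S)

theorem phi_mul_vol (hS : vol w S ≠ 0) : phi w S * vol w S = eW w S univ :=
  div_mul_cancel₀ _ hS

theorem phi_sdiff_le_phi_of_add_le (hsym : ∀ u v, w u v = w v u) (hSB : S ⊆ B)
    (hB : vol w B ≠ 0) (hT : 0 < vol w (B \ S))
    (h : phi w B * vol w S + eW w S B ≤ eW w S (univ \ B)) :
    phi w (B \ S) ≤ phi w B := by
  have hcut : eW w (B \ S) univ = eW w S B + eW w (B \ S) (univ \ B) := by
    rw [← eW_sdiff_eq_eW hsym hSB, eW_add_eW_sdiff_right (subset_univ B)]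
  have hshare : phi w B * vol w S + phi w B * vol w (B \ S) =
      eW w S (univ \ B) + eW w (B \ S) (univ \ B) := by
    rw [← mul_add, vol_add_vol_sdiff hSB, phi_mul_vol hB, eW_add_eW_sdiff_left hSB]
  rw [phi, div_le_iff₀ hT]
  linarith

theorem mul_phi_mul_vol_le_eW_add_eW {r : ℝ} (hS : 0 < vol w S)
    (h : r * phi w B ≤ phi w S) :
    r * (phi w B * vol w S) ≤ eW w S (univ \ B) + eW w S B := by
  rw [add_comm, eW_add_eW_sdiff_right (subset_univ B), ← phi_mul_vol hS.ne', ← mul_assoc]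
  exact mul_le_mul_of_nonneg_right h hS.le

theorem phi_sdiff_le_phi_of_eW_le_mul_eW {ε : ℝ} (hsym : ∀ u v, w u v = w v u)
    (hw : ∀ u v, 0 ≤ w u v) (hε0 : 0 ≤ ε) (hε1 : ε ≤ 1) (hSB : S ⊆ B)
    (hS : 0 < vol w S) (hT : 0 < vol w (B \ S))
    (hcut : eW w S B ≤ ε / 3 * eW w S (univ \ B)) (hphi : (1 + ε) * phi w B ≤ phi w S) :
    phi w (B \ S) ≤ phi w B := by
  have hB : 0 < vol w B := vol_add_vol_sdiff hSB ▸ add_pos hS hT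
  apply phi_sdiff_le_phi_of_add_le hsym hSB hB.ne' hT
  have hshare := mul_phi_mul_vol_le_eW_add_eW hS hphi
  have hpS : 0 ≤ phi w B * vol w S := mul_nonneg (phi_nonneg hw B) hS.le
  exact add_le_of_one_add_mul_le_add hε0 hε1 hpS hcut hshare

theorem phi_sdiff_le_phi_of_eW_le_mul_phi {ε : ℝ} (hsym : ∀ u v, w u v = w v u)
    (hw : ∀ u v, 0 ≤ w u v) (hSB : S ⊆ B) (hS : 0 < vol w S) (hT : 0 < vol w (B \ S))
    (hcut : eW w S B ≤ ε / 3 * (phi w B * vol w S)) (hphi : (1 + ε) * phi w B ≤ phi w S) :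
    phi w (B \ S) ≤ phi w B := by
  have hB : 0 < vol w B := vol_add_vol_sdiff hSB ▸ add_pos hS hT
  apply phi_sdiff_le_phi_of_add_le hsym hSB hB.ne' hT
  have hshare := mul_phi_mul_vol_le_eW_add_eW hS hphi
  linarith [eW_nonneg hw S B]

theorem eW_le_mul_eW_of_mul_vol_le {r : ℝ} (hw : ∀ u v, 0 ≤ w u v) (hr : 0 ≤ r) (hSB : S ⊆ B)
    (hB : 0 < vol w B)
    (h : eW w S B * vol w B ≤ r * vol w (B \ S) * eW w S (univ \ B)) :
    eW w S B ≤ r * eW w S (univ \ B) := by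
  have hout := eW_nonneg hw S (univ \ B)
  have hvol : vol w (B \ S) ≤ vol w B := by
    linarith [vol_add_vol_sdiff (w := w) hSB, vol_nonneg hw S]
  refine le_of_mul_le_mul_right ?_ hB
  calc eW w S B * vol w B ≤ r * vol w (B \ S) * eW w S (univ \ B) := h
    _ ≤ r * vol w B * eW w S (univ \ B) := by gcongr
    _ = r * eW w S (univ \ B) * vol w B := by ring

theorem eW_le_mul_phi_mul_vol_of_mul_vol_le {r : ℝ} (hw : ∀ u v, 0 ≤ w u v) (hr : 0 ≤ r)
    (hSB : S ⊆ B) (hB : 0 < vol w B)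
    (h : eW w S B * vol w B ≤ r * vol w (B \ S) * eW w S (univ \ B)) :
    eW w S B ≤ r * (phi w B * vol w (B \ S)) := by
  have hT := vol_nonneg hw (B \ S)
  have hout : eW w S (univ \ B) ≤ eW w B univ := by
    linarith [eW_add_eW_sdiff_left (w := w) hSB univ, eW_nonneg hw (B \ S) (univ \ B)]
  refine le_of_mul_le_mul_right ?_ hB
  calc eW w S B * vol w B ≤ r * vol w (B \ S) * eW w S (univ \ B) := h
    _ ≤ r * vol w (B \ S) * eW w B univ := by gcongr
    _ = r * (phi w B * vol w (B \ S)) * vol w B := by rw [← phi_mul_vol hB.ne']; ring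

end Conductance

theorem stmt6 {V : Type*} [Fintype V] [DecidableEq V] (w : V → V → ℝ)
    (hsym : ∀ u v, w u v = w v u) (hnonneg : ∀ u v, 0 ≤ w u v)
    (hdeg : ∀ v, 0 < deg w v)
    (ε : ℝ) (hε0 : 0 < ε) (hε1 : ε ≤ 1)
    (B S : Finset V) (hSB : S ⊆ B) (hSne : S.Nonempty) (hSpr : S ≠ B)
    (h1 : eW w S B * vol w B ≤ ε / 3 * vol w (B \ S) * eW w S (Finset.univ \ B))
    (h2 : (1 + ε) * phi w B ≤ max (phi w S) (phi w (B \ S))) :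
    min (phi w S) (phi w (B \ S)) ≤ phi w B := by
  have hS : 0 < vol w S := vol_pos hdeg hSne
  have hT : 0 < vol w (B \ S) :=
    vol_pos hdeg (sdiff_nonempty.2 fun hBS => hSpr (hSB.antisymm hBS))
  have hB : 0 < vol w B := vol_pos hdeg (hSne.mono hSB)
  have hTS : B \ (B \ S) = S := Finset.sdiff_sdiff_eq_self hSB
  rcases le_max_iff.1 h2 with hphiS | hphiT
  · have hcut := eW_le_mul_eW_of_mul_vol_le hnonneg (by positivity) hSB hB h1
    exact min_le_of_right_le <|
      phi_sdiff_le_phi_of_eW_le_mul_eW hsym hnonneg hε0.le hε1 hSB hS hT hcut hphiS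
  · have hcut := eW_le_mul_phi_mul_vol_of_mul_vol_le hnonneg (by positivity) hSB hB h1
    rw [← eW_sdiff_eq_eW hsym hSB] at hcut
    have hle := phi_sdiff_le_phi_of_eW_le_mul_phi hsym hnonneg sdiff_subset hT (hTS.symm ▸ hS)
      hcut hphiT
    exact min_le_of_left_le (hTS ▸ hle)
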